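/- arXiv:math/0310118 — 4 statements merged into one kernel-verified Lean document; each statement's English description precedes it below -/
import Mathlib

section
/- Let V be a finite-dimensional real vector space with a nondegenerate symmetric bilinear form g, let c be a nonzero real number, and let φ : V → V be a linear map with φ ∘ φ = Id and g(φx, φy) = g(x, y) for all x, y. Define A(x,y) : V → V by A(x,y)z := c(g(φy, z)φx − g(φx, z)φy). Then for every k ≥ 2 and every family (e₁, …, e_k) with g(e_i, e_j) = δ_{ij}, the higher order curvature operator Θ := Σ_{i,j=1}^{k} A(e_i,e_j) ∘ A(e_i,e_j) satisfies Θz = −2(k−1)c² Σ_{l=1}^{k} g(φe_l, z) φe_l for all z ∈ V; that is, Θ equals −2(k−1)c² times the g-orthogonal projection onto the span of {φe₁, …, φe_k}. -/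
/-! The vectors `f i = φ (e i)` are again orthonormal because `φ` is an isometry. Write
`u i = g (f i) z • f i`. For `i ≠ j` the operator `A (e i) (e j)` is `c` times an infinitesimal
rotation of the plane spanned by `f i` and `f j`, so its square sends `z` to `-c² (u i + u j)`;
for `i = j` it vanishes. Hence every square is `-c² (u i + u j)` plus a diagonal correction
`2 c² u i`, and the double sum is `(-2 k c² + 2 c²) ∑ l, u l`. -/

/-- Let `φ` be an isometry of `(V, g)` with `φ² = Id`, `c ≠ 0`, and
`A x y z := c (g(φy,z) φx − g(φx,z) φy)`. Then for every orthonormal family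
`(e₁, …, e_k)` with `k ≥ 2`, the higher order curvature operator
`Θ = Σ_{i,j} A(eᵢ,eⱼ) ∘ A(eᵢ,eⱼ)` satisfies
`Θ z = −2(k−1) c² Σ_l g(φe_l, z) φe_l`, i.e. `Θ` is `−2(k−1)c²` times the
`g`-orthogonal projection onto the span of `{φe₁, …, φe_k}`. -/
theorem higherOrderOp_of_Rphi
    {V : Type*} [AddCommGroup V] [Module ℝ V] [FiniteDimensional ℝ V]
    (g : LinearMap.BilinForm ℝ V)
    (hgsymm : ∀ x y : V, g x y = g y x)
    (hgnd : g.Nondegenerate)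
    (c : ℝ) (hc : c ≠ 0)
    (φ : V →ₗ[ℝ] V)
    (hφ2 : φ ∘ₗ φ = LinearMap.id)
    (hiso : ∀ x y : V, g (φ x) (φ y) = g x y)
    (A : V → V → V → V)
    (hA : ∀ x y z : V, A x y z = c • (g (φ y) z • φ x - g (φ x) z • φ y))
    (k : ℕ) (hk : 2 ≤ k)
    (e : Fin k → V)
    (he : ∀ i j : Fin k, g (e i) (e j) = if i = j then 1 else 0) :
    ∀ z : V,
      (∑ i : Fin k, ∑ j : Fin k, A (e i) (e j) (A (e i) (e j) z))
        = (-(2 * ((k : ℝ) - 1) * c ^ 2)) • ∑ l : Fin k, g (φ (e l)) z • φ (e l) := by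
  intro z
  have hf : ∀ i j : Fin k, g (φ (e i)) (φ (e j)) = if i = j then 1 else 0 := fun i j => by
    rw [hiso, he]
  have key : ∀ i j : Fin k, A (e i) (e j) (A (e i) (e j) z)
      = (-c ^ 2) • (g (φ (e i)) z • φ (e i)) + (-c ^ 2) • (g (φ (e j)) z • φ (e j))
        + if i = j then (2 * c ^ 2) • (g (φ (e i)) z • φ (e i)) else 0 := by
    intro i j
    by_cases h : i = j
    · subst h
      simp only [hA, sub_self, smul_zero, if_true]
      module
    · simp only [hA, map_smul, map_sub, smul_eq_mul, hf, h, Ne.symm h, if_true, if_false]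
      module
  simp only [key, Finset.sum_add_distrib, Finset.sum_const, Finset.card_univ, Fintype.card_fin,
    Finset.sum_ite_eq, Finset.mem_univ, if_true, ← Finset.smul_sum, ← Nat.cast_smul_eq_nsmul ℝ]
  module
end

section
/- Let V be a finite-dimensional real vector space with a nondegenerate symmetric bilinear form g, and let S : V → V be a linear map with g(Sx, y) = g(x, Sy) for all x, y and S ∘ S = 0. Define R_S(x,y) : V → V by R_S(x,y)z := g(Sy, z)Sx − g(Sx, z)Sy. Then R_S(x,y) ∘ R_S(x',y') = 0 for all x, y, x', y' ∈ V; in particular, for every finite family (e₁, …, e_k) in V, the higher order curvature operator Σ_{i,j=1}^{k} R_S(e_i,e_j) ∘ R_S(e_i,e_j) is the zero operator. -/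
/-- If `S` is `g`-self-adjoint with `S ∘ S = 0` and
`R_S x y z := g(Sy,z) Sx − g(Sx,z) Sy`, then `R_S(x,y) ∘ R_S(x',y') = 0` for all
`x, y, x', y'`; in particular every higher order curvature operator
`Σ_{i,j} R_S(eᵢ,eⱼ) ∘ R_S(eᵢ,eⱼ)` vanishes. -/
theorem RS_comp_zero_of_nilpotent
    {V : Type*} [AddCommGroup V] [Module ℝ V] [FiniteDimensional ℝ V]
    (g : LinearMap.BilinForm ℝ V)
    (hgsymm : ∀ x y : V, g x y = g y x)
    (hgnd : g.Nondegenerate)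
    (S : V →ₗ[ℝ] V)
    (hsa : ∀ x y : V, g (S x) y = g x (S y))
    (hS2 : S ∘ₗ S = 0)
    (RS : V → V → V → V)
    (hRS : ∀ x y z : V, RS x y z = g (S y) z • S x - g (S x) z • S y) :
    (∀ x y x' y' z : V, RS x y (RS x' y' z) = 0) ∧
    (∀ (k : ℕ) (e : Fin k → V) (z : V),
      (∑ i : Fin k, ∑ j : Fin k, RS (e i) (e j) (RS (e i) (e j) z)) = 0) := by
  have hSS : ∀ x, S (S x) = 0 := fun x => LinearMap.congr_fun hS2 x
  -- The range of `S` is totally isotropic: `g (S a) (S b) = g a (S (S b)) = 0`.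
  have hiso : ∀ a b, g (S a) (S b) = 0 := fun a b => by rw [hsa, hSS, map_zero]
  have hcomp : ∀ x y x' y' z : V, RS x y (RS x' y' z) = 0 := fun x y x' y' z => by
    simp [hRS, hiso]
  exact ⟨hcomp, fun k e z => by simp [hcomp]⟩
end

section
/- Let p ≥ 2, let d : Fin p → ℝ, and let g_d be the bilinear form on V = (Fin p → ℝ) × (Fin p → ℝ) given by g_d((x,y),(x',y')) := (Σᵢ dᵢxᵢ)(Σⱼ dⱼx'ⱼ) + Σᵢ (xᵢ y'ᵢ + x'ᵢ yᵢ). If Z₁ = (x₁, y₁) and Z₂ = (x₂, y₂) span a 2-dimensional subspace of V on which g_d is definite (positive definite or negative definite), then x₁ and x₂ are linearly independent in Fin p → ℝ. -/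
/-- The neutral signature `(p,p)` metric
`g_d((x,y),(x',y')) = (Σᵢ dᵢxᵢ)(Σⱼ dⱼx'ⱼ) + Σᵢ (xᵢ y'ᵢ + x'ᵢ yᵢ)`. -/
noncomputable def gd {p : ℕ} (d : Fin p → ℝ)
    (z w : (Fin p → ℝ) × (Fin p → ℝ)) : ℝ :=
  (∑ i, d i * z.1 i) * (∑ j, d j * w.1 j) + ∑ i, (z.1 i * w.2 i + w.1 i * z.2 i)

/-- if `Z₁ = (x₁,y₁)` and `Z₂ = (x₂,y₂)` span a 2-dimensional
subspace of `V = (Fin p → ℝ) × (Fin p → ℝ)` on which `g_d` is definite, then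
`x₁` and `x₂` are linearly independent. -/
theorem x_components_independent_of_definite_plane
    (p : ℕ) (hp : 2 ≤ p) (d : Fin p → ℝ)
    (Z₁ Z₂ : (Fin p → ℝ) × (Fin p → ℝ))
    (hind : LinearIndependent ℝ ![Z₁, Z₂])
    (hdef :
      (∀ Z ∈ Submodule.span ℝ ({Z₁, Z₂} : Set ((Fin p → ℝ) × (Fin p → ℝ))),
        Z ≠ 0 → 0 < gd d Z Z) ∨
      (∀ Z ∈ Submodule.span ℝ ({Z₁, Z₂} : Set ((Fin p → ℝ) × (Fin p → ℝ))),
        Z ≠ 0 → gd d Z Z < 0)) :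
    LinearIndependent ℝ ![Z₁.1, Z₂.1] := by
  rw [LinearIndependent.pair_iff] at hind ⊢
  intro a b hab
  apply hind
  -- A vector of the plane with vanishing `x`-component is null for `g_d`, hence zero.
  by_contra hZ
  have hmem : a • Z₁ + b • Z₂ ∈
      Submodule.span ℝ ({Z₁, Z₂} : Set ((Fin p → ℝ) × (Fin p → ℝ))) :=
    Submodule.mem_span_pair.2 ⟨a, b, rfl⟩
  have hx : (a • Z₁ + b • Z₂).1 = 0 := hab
  have hnull : gd d (a • Z₁ + b • Z₂) (a • Z₁ + b • Z₂) = 0 := by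
    unfold gd
    rw [hx]
    simp
  rcases hdef with h | h
  · exact (h _ hmem hZ).ne' hnull
  · exact (h _ hmem hZ).ne hnull
end

section
/- Let s ≥ 2, let a ∈ ℝ and c : Fin s → ℝ. On V = (Fin s → ℝ)³ define g^c(x,y) := g₃ₛ(x,y) + Σᵢ cᵢ xᵘᵢ yᵘᵢ and R^a(x,y,z,w) := R₃ₛ(x,y,z,w) − a Σ_{i<j} αᵢⱼ(x,y) αᵢⱼ(z,w). Then there exists a linear automorphism Φ of V such that g^c(Φx, Φy) = g₃ₛ(x, y) and R^a(Φx, Φy, Φz, Φw) = R₃ₛ(x, y, z, w) for all x, y, z, w ∈ V; that is, the model space (V, g^c, R^a) is isomorphic to the model space (V, g₃ₛ, R₃ₛ). -/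
/-!
The automorphism is `Uᵢ ↦ Uᵢ + e Tᵢ + kᵢ Vᵢ`, `Tᵢ ↦ Tᵢ + e Vᵢ`, `Vᵢ ↦ Vᵢ`, with `e = -a/4` and
`kᵢ = (e² - cᵢ)/2`. It fixes every `xᵘᵢ`, hence every `αᵢⱼ`, while `βᵢⱼ` becomes `βᵢⱼ - e αᵢⱼ`
(`betaF_shear`). So `R3` changes by `-2e Σ_{i≠j} αᵢⱼ αᵢⱼ`, which is `-4e Σ_{i<j} αᵢⱼ αᵢⱼ` by
symmetry in `i, j` (`sum_ne_eq_two_mul_sum_lt`); the choice of `e` cancels the perturbation of the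
curvature tensor. The coefficient of `Tᵢ ↦ Vᵢ` keeps `Uᵢ` and `Tᵢ` orthogonal, and the choice
of `kᵢ` cancels `cᵢ` in the norm of `Uᵢ`.
-/

/-- The model vector space `ℝ^{3s}`, written as triples `x = (xᵘ, xᵗ, xᵛ)`. -/
abbrev V3 (s : ℕ) := (Fin s → ℝ) × (Fin s → ℝ) × (Fin s → ℝ)

/-- The signature `(2s, s)` inner product
`g₃ₛ(x,y) = Σᵢ (xᵘᵢ yᵛᵢ + xᵛᵢ yᵘᵢ − xᵗᵢ yᵗᵢ)`. -/
noncomputable def g3 {s : ℕ} (x y : V3 s) : ℝ :=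
  ∑ i, (x.1 i * y.2.2 i + x.2.2 i * y.1 i - x.2.1 i * y.2.1 i)

/-- `αᵢⱼ(x,y) := xᵘᵢ yᵘⱼ − xᵘⱼ yᵘᵢ`. -/
noncomputable def alphaF {s : ℕ} (i j : Fin s) (x y : V3 s) : ℝ :=
  x.1 i * y.1 j - x.1 j * y.1 i

/-- `βᵢⱼ(x,y) := xᵘⱼ yᵗᵢ − xᵗᵢ yᵘⱼ`. -/
noncomputable def betaF {s : ℕ} (i j : Fin s) (x y : V3 s) : ℝ :=
  x.1 j * y.2.1 i - x.2.1 i * y.1 j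

/-- The algebraic curvature tensor
`R₃ₛ(x,y,z,w) = Σ_{i≠j} [αᵢⱼ(x,y) βᵢⱼ(z,w) + βᵢⱼ(x,y) αᵢⱼ(z,w)]`. -/
noncomputable def R3 {s : ℕ} (x y z w : V3 s) : ℝ :=
  ∑ i, ∑ j, if i = j then 0 else
    (alphaF i j x y * betaF i j z w + betaF i j x y * alphaF i j z w)

/-- The perturbed inner product `g^c(x,y) := g₃ₛ(x,y) + Σᵢ cᵢ xᵘᵢ yᵘᵢ`. -/
noncomputable def gC {s : ℕ} (c : Fin s → ℝ) (x y : V3 s) : ℝ :=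
  g3 x y + ∑ i, c i * x.1 i * y.1 i

/-- The perturbed curvature tensor
`R^a(x,y,z,w) := R₃ₛ(x,y,z,w) − a Σ_{i<j} αᵢⱼ(x,y) αᵢⱼ(z,w)`. -/
noncomputable def Ra {s : ℕ} (a : ℝ) (x y z w : V3 s) : ℝ :=
  R3 x y z w - a * ∑ i, ∑ j, if i < j then alphaF i j x y * alphaF i j z w else 0

/-- The unipotent map with `Uᵢ ↦ Uᵢ + e Tᵢ + kᵢ Vᵢ`, `Tᵢ ↦ Tᵢ + e Vᵢ`, `Vᵢ ↦ Vᵢ`,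
written in coordinates. -/
noncomputable def shear {s : ℕ} (e : ℝ) (k : Fin s → ℝ) : V3 s ≃ₗ[ℝ] V3 s where
  toFun x := (x.1, fun i => x.2.1 i + e * x.1 i,
    fun i => x.2.2 i + k i * x.1 i + e * x.2.1 i)
  invFun x := (x.1, fun i => x.2.1 i - e * x.1 i,
    fun i => x.2.2 i - k i * x.1 i - e * (x.2.1 i - e * x.1 i))
  map_add' x y := by
    ext i <;> simp <;> ring
  map_smul' r x := by
    ext i <;> simp <;> ring
  left_inv x := by
    ext i <;> simp <;> ring
  right_inv x := by
    ext i <;> simp <;> ring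

lemma alphaF_shear {s : ℕ} (e : ℝ) (k : Fin s → ℝ) (i j : Fin s) (x y : V3 s) :
    alphaF i j (shear e k x) (shear e k y) = alphaF i j x y := rfl

lemma betaF_shear {s : ℕ} (e : ℝ) (k : Fin s → ℝ) (i j : Fin s) (x y : V3 s) :
    betaF i j (shear e k x) (shear e k y) = betaF i j x y - e * alphaF i j x y := by
  simp only [betaF, alphaF, shear, LinearEquiv.coe_mk, LinearMap.coe_mk, AddHom.coe_mk]
  ring

lemma sum_ne_eq_two_mul_sum_lt {s : ℕ} (f : Fin s → Fin s → ℝ) (hf : ∀ i j, f i j = f j i) :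
    (∑ i, ∑ j, if i = j then 0 else f i j) = 2 * ∑ i, ∑ j, if i < j then f i j else 0 := by
  have hswap : (∑ i, ∑ j, if j < i then f i j else 0) = ∑ i, ∑ j, if i < j then f i j else 0 := by
    rw [Finset.sum_comm]
    simp only [hf]
  have hsplit : (∑ i, ∑ j, if i = j then 0 else f i j) =
      (∑ i, ∑ j, if i < j then f i j else 0) + ∑ i, ∑ j, if j < i then f i j else 0 := by
    simp only [← Finset.sum_add_distrib]
    refine Finset.sum_congr rfl fun i _ => Finset.sum_congr rfl fun j _ => ?_
    rcases lt_trichotomy i j with h | h | h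
    · simp [h, h.ne, h.not_gt]
    · simp [h]
    · simp [h, h.ne', h.not_gt]
  rw [hsplit, hswap, two_mul]

lemma R3_shear {s : ℕ} (e : ℝ) (k : Fin s → ℝ) (x y z w : V3 s) :
    R3 (shear e k x) (shear e k y) (shear e k z) (shear e k w) =
      R3 x y z w - 4 * e * ∑ i, ∑ j, if i < j then alphaF i j x y * alphaF i j z w else 0 := by
  have h := sum_ne_eq_two_mul_sum_lt (fun i j => alphaF i j x y * alphaF i j z w)
    (fun i j => by simp only [alphaF]; ring)
  have h4 : ∀ S : ℝ, 4 * e * S = 2 * e * (2 * S) := fun S => by ring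
  rw [h4, ← h]
  simp only [R3, alphaF_shear, betaF_shear, Finset.mul_sum, ← Finset.sum_sub_distrib]
  refine Finset.sum_congr rfl fun i _ => Finset.sum_congr rfl fun j _ => ?_
  split_ifs <;> ring

/-- the model space `(V, g^c, R^a)` is isomorphic to the model
space `(V, g₃ₛ, R₃ₛ)`: there is a linear automorphism `Φ` of `V` pulling `g^c`
back to `g₃ₛ` and `R^a` back to `R₃ₛ`. -/
theorem perturbed_model_isomorphic
    (s : ℕ) (hs : 2 ≤ s) (a : ℝ) (c : Fin s → ℝ) :
    ∃ Φ : V3 s ≃ₗ[ℝ] V3 s,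
      (∀ x y : V3 s, gC c (Φ x) (Φ y) = g3 x y) ∧
      (∀ x y z w : V3 s, Ra a (Φ x) (Φ y) (Φ z) (Φ w) = R3 x y z w) := by
  refine ⟨shear (-a / 4) (fun i => ((-a / 4) ^ 2 - c i) / 2), fun x y => ?_, fun x y z w => ?_⟩
  · simp only [gC, g3, ← Finset.sum_add_distrib]
    refine Finset.sum_congr rfl fun i _ => ?_
    simp only [shear, LinearEquiv.coe_mk, LinearMap.coe_mk, AddHom.coe_mk]
    ring
  · simp only [Ra, R3_shear, alphaF_shear]
    ring
end
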